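/- For every integer n ≥ 0, every (a b; c d) ∈ SL₂(ℤ), and every τ ∈ ℍ, the completion V̂_{2n}(τ) := ∑_{0≤j≤n} (−1)^{n+j} 3^j π^{2n−j} V_{2n−2j}(q) / ((2v)^j j! (2n−2j)!) satisfies V̂_{2n}((aτ+b)/(cτ+d)) = (cτ+d)^{2n} V̂_{2n}(τ); moreover V̂_{2n} is a polynomial in 1/v of degree exactly n with holomorphic coefficients, so it is an almost holomorphic modular form of weight 2n and depth n. -/

import Mathlib

/-!
The numerators of the `V_{2n}`, multiplied by `q^{1/24}`, are the theta series
`A_n(τ) = ∑ (−1)^j (6j+1)^{2n} q^{(6j+1)²/24}` (`thetaNum`), and termwise differentiation gives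
`A_n' = (πi/12) A_{n+1}`. By the pentagonal number theorem `A_0 = η`, so `V_{2n} = A_n / η` is
holomorphic on the upper half-plane, `V_2 = (12/πi) η'/η = E_2`, and the quotient rule is
Ramanujan's recursion `24 q dV_{2n}/dq = V_{2n+2} − V_2 V_{2n}` (`hasDerivAt_Vram_qq`).

Put `W_n = (−1)^n π^{2n} V_{2n} / (2n)!` (`Wfun`). Starting from the transformation law of `E_2`,
differentiating along `τ ↦ γτ` and using the recursion on both sides proves, by induction on `n`,
`W_n(γτ) = ∑_{r+m=n} (3πi c)^r / r! · (cτ+d)^{2m+r} W_m(τ)` (`Wfun_mobius`). For the generating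
series `W(τ; X) = ∑ W_n(τ) Xⁿ` this reads
`W(γτ; X) = e^{3πi c(cτ+d)X} W(τ; (cτ+d)² X)`.

The completions have generating series `e^{3πX/(2v)} W(τ; X)` (`Vhat_eq_coeff`). Since
`1/Im(γτ) = (cτ+d)²/v − 2ic(cτ+d)`, the factor `e^{3πX/(2v)}` absorbs the exponential above, so the
generating series at `γτ` is the one at `τ` with `X` replaced by `(cτ+d)² X` (`Vhat_mobius`). The
coefficient of `v^{-n}` in `V̂_{2n}` is `(3π/2)ⁿ/n! ≠ 0` because `V_0 = 1`.
-/

open Complex Filter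
open scoped Real

noncomputable section

/-- `q = e^{2πiτ}`. -/
def qq (τ : ℂ) : ℂ := Complex.exp (2 * (π : ℂ) * Complex.I * τ)

/-- Ramanujan's series `V_{2n}(q)`:
numerator `∑_{j∈ℤ} (−1)^j (6j+1)^{2n} q^{j(3j+1)/2}` divided by
denominator `∑_{j∈ℤ} (−1)^j q^{j(3j+1)/2}`. -/
def Vram (n : ℕ) (q : ℂ) : ℂ :=
  (∑' j : ℤ, (-1 : ℂ) ^ j * ((6 * j + 1 : ℤ) : ℂ) ^ (2 * n) * q ^ (j * (3 * j + 1) / 2)) /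
    (∑' j : ℤ, (-1 : ℂ) ^ j * q ^ (j * (3 * j + 1) / 2))

/-- The completion
`V̂_{2n}(τ) = ∑_{0≤j≤n} (−1)^{n+j} 3^j π^{2n−j} V_{2n−2j}(q) / ((2v)^j j! (2n−2j)!)`. -/
def Vhat (n : ℕ) (τ : ℂ) : ℂ :=
  ∑ j ∈ Finset.range (n + 1),
    (-1 : ℂ) ^ (n + j) * 3 ^ j * (π : ℂ) ^ (2 * n - j) * Vram (n - j) (qq τ) /
      ((2 * (τ.im : ℂ)) ^ j * (Nat.factorial j : ℂ) * (Nat.factorial (2 * n - 2 * j) : ℂ))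


open scoped UpperHalfPlane
open Finset.HasAntidiagonal (antidiagonal mem_antidiagonal)
open PowerSeries (rescale)

/-! ### The theta series and their derivatives -/

/-- The theta series `∑_{j∈ℤ} (−1)^j (6j+1)^{2n} q^{(6j+1)²/24}`, that is, `q^{1/24}` times the
numerator of `V_{2n}(q)`. -/
def thetaNum (n : ℕ) (τ : ℂ) : ℂ :=
  ∑' j : ℤ, (-1 : ℂ) ^ j * ((6 * j + 1 : ℤ) : ℂ) ^ (2 * n) *
    Complex.exp ((π : ℂ) * I / 12 * ((6 * j + 1 : ℤ) : ℂ) ^ 2 * τ)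

lemma norm_theta_term (n : ℕ) (j : ℤ) (τ : ℂ) :
    ‖(-1 : ℂ) ^ j * ((6 * j + 1 : ℤ) : ℂ) ^ (2 * n) *
      Complex.exp ((π : ℂ) * I / 12 * ((6 * j + 1 : ℤ) : ℂ) ^ 2 * τ)‖ =
    |((6 * j + 1 : ℤ) : ℝ)| ^ (2 * n) *
      Real.exp (-π * (τ.im / 12 * ((6 * j + 1 : ℤ) : ℝ) ^ 2)) := by
  have h : ((π : ℂ) * I / 12 * ((6 * j + 1 : ℤ) : ℂ) ^ 2 * τ) =
      ((π / 12 * ((6 * j + 1 : ℤ) : ℝ) ^ 2 : ℝ) : ℂ) * (I * τ) := by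
    push_cast; ring
  rw [norm_mul, norm_mul, norm_pow, norm_zpow, norm_neg, norm_one, one_zpow, one_mul,
    Complex.norm_exp, h, Complex.re_ofReal_mul, Complex.norm_intCast]
  congr 2
  simp
  ring

lemma summable_theta_bound (k : ℕ) {T : ℝ} (hT : 0 < T) :
    Summable fun j : ℤ ↦ |((6 * j + 1 : ℤ) : ℝ)| ^ k *
      Real.exp (-π * (T / 12 * ((6 * j + 1 : ℤ) : ℝ) ^ 2)) := by
  have h := summable_pow_mul_jacobiTheta₂_term_bound 0 (show 0 < T / 12 by positivity) k
  have hi : Function.Injective (fun j : ℤ ↦ 6 * j + 1) := fun a b hab ↦ by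
    simp only at hab; omega
  simpa [Function.comp_def] using h.comp_injective hi

lemma summable_theta (n : ℕ) {τ : ℂ} (hτ : 0 < τ.im) :
    Summable fun j : ℤ ↦ (-1 : ℂ) ^ j * ((6 * j + 1 : ℤ) : ℂ) ^ (2 * n) *
      Complex.exp ((π : ℂ) * I / 12 * ((6 * j + 1 : ℤ) : ℂ) ^ 2 * τ) :=
  (summable_theta_bound (2 * n) hτ).of_norm_bounded fun j ↦ (norm_theta_term n j τ).le

lemma hasDerivAt_thetaNum (n : ℕ) {τ : ℂ} (hτ : 0 < τ.im) :
    HasDerivAt (thetaNum n) ((π : ℂ) * I / 12 * thetaNum (n + 1) τ) τ := by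
  obtain ⟨T, hT, hTτ⟩ := exists_between hτ
  let V : Set ℂ := {z | T < z.im}
  have hVo : IsOpen V := isOpen_lt continuous_const Complex.continuous_im
  have hVp : IsPreconnected V := (convex_halfSpace_im_gt T).isPreconnected
  have key := hasDerivAt_tsum_of_isPreconnected (𝕜 := ℂ) (t := V) (y₀ := τ) (y := τ)
    (g := fun (j : ℤ) z ↦ (-1 : ℂ) ^ j * ((6 * j + 1 : ℤ) : ℂ) ^ (2 * n) *
      Complex.exp ((π : ℂ) * I / 12 * ((6 * j + 1 : ℤ) : ℂ) ^ 2 * z))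
    (g' := fun (j : ℤ) z ↦ (π : ℂ) * I / 12 * ((-1 : ℂ) ^ j *
      ((6 * j + 1 : ℤ) : ℂ) ^ (2 * (n + 1)) *
      Complex.exp ((π : ℂ) * I / 12 * ((6 * j + 1 : ℤ) : ℂ) ^ 2 * z)))
    ((summable_theta_bound (2 * (n + 1)) hT).mul_left (π / 12)) hVo hVp ?_ ?_ hTτ
    (summable_theta n hτ) hTτ
  · rw [tsum_mul_left] at key
    exact key
  · intro j y _
    have h1 : HasDerivAt (fun z : ℂ ↦ (π : ℂ) * I / 12 * ((6 * j + 1 : ℤ) : ℂ) ^ 2 * z)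
        ((π : ℂ) * I / 12 * ((6 * j + 1 : ℤ) : ℂ) ^ 2) y := by
      simpa using (hasDerivAt_id y).const_mul ((π : ℂ) * I / 12 * ((6 * j + 1 : ℤ) : ℂ) ^ 2)
    convert! (h1.cexp.const_mul ((-1 : ℂ) ^ j * ((6 * j + 1 : ℤ) : ℂ) ^ (2 * n))) using 1
    ring
  · intro j y hy
    rw [norm_mul, norm_theta_term]
    have h2 : ‖(π : ℂ) * I / 12‖ = π / 12 := by simp [abs_of_pos Real.pi_pos]
    rw [h2]
    have : T ≤ y.im := le_of_lt hy
    gcongr π / 12 * (_ * ?_)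
    apply Real.exp_le_exp.mpr
    have h3 : T / 12 * ((6 * j + 1 : ℤ) : ℝ) ^ 2 ≤ y.im / 12 * ((6 * j + 1 : ℤ) : ℝ) ^ 2 := by
      gcongr
    nlinarith [Real.pi_pos]

/-! ### Euler's pentagonal number theorem on the unit disc -/

lemma norm_prod_one_sub_pow_le {x : ℂ} (hx : ‖x‖ < 1) (k n : ℕ) :
    ‖∏ i ∈ Finset.range n, (1 - x ^ (k + i + 1))‖ ≤ Real.exp (1 - ‖x‖)⁻¹ := by
  rw [norm_prod]
  calc ∏ i ∈ Finset.range n, ‖1 - x ^ (k + i + 1)‖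
      ≤ ∏ i ∈ Finset.range n, (1 + ‖x‖ ^ i) := by
        refine Finset.prod_le_prod (fun _ _ ↦ norm_nonneg _) fun i _ ↦ ?_
        refine (norm_sub_le _ _).trans ?_
        rw [norm_one, norm_pow]
        gcongr 1 + ?_
        exact pow_le_pow_of_le_one (norm_nonneg _) hx.le (by omega)
    _ ≤ Real.exp (∑ i ∈ Finset.range n, ‖x‖ ^ i) :=
        Real.prod_one_add_le_exp_sum _ fun i ↦ by positivity
    _ ≤ Real.exp (1 - ‖x‖)⁻¹ := by
        apply Real.exp_le_exp.mpr
        rw [← tsum_geometric_of_lt_one (norm_nonneg _) hx]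
        exact (summable_geometric_of_lt_one (norm_nonneg _) hx).sum_le_tsum _
          fun i _ ↦ by positivity

lemma norm_pentagonal_aux_le {x : ℂ} (hx : ‖x‖ < 1) (k n : ℕ) :
    ‖x ^ ((k + 1) * n) * ∏ i ∈ Finset.range (n + 1), (1 - x ^ (k + i + 1))‖ ≤
      ‖x‖ ^ n * Real.exp (1 - ‖x‖)⁻¹ := by
  rw [norm_mul, norm_pow]
  refine mul_le_mul ?_ ?_ (norm_nonneg _) (by positivity)
  · exact pow_le_pow_of_le_one (norm_nonneg _) hx.le (by nlinarith)
  · exact norm_prod_one_sub_pow_le hx k _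

/-- The pentagonal number theorem for complex `x` in the unit disc; the formal identity behind it
is `Pentagonal.tprod_one_sub_pow`, whose convergence hypotheses are checked here. -/
lemma tprod_one_sub_pow_eq_tsum {x : ℂ} (hx : ‖x‖ < 1)
    (hs : Summable fun j : ℤ ↦ (-1 : ℂ) ^ j * x ^ pentagonal (-j)) :
    ∏' n : ℕ, (1 - x ^ (n + 1)) = ∑' j : ℤ, (-1 : ℂ) ^ j * x ^ pentagonal (-j) := by
  have hg := summable_geometric_of_lt_one (norm_nonneg x) hx
  have hbd : Summable fun n : ℕ ↦ ‖x‖ ^ n * Real.exp (1 - ‖x‖)⁻¹ := hg.mul_right _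
  -- Pairing `j = k` with `j = -(k + 1)` turns the bilateral series into the one over `ℕ`.
  have hnat : HasSum (fun k : ℕ ↦ (-1 : ℂ) ^ k * (x ^ pentagonal (-k) - x ^ pentagonal (k + 1)))
      (∑' j : ℤ, (-1 : ℂ) ^ j * x ^ pentagonal (-j)) := by
    convert hs.hasSum.nat_add_neg_add_one using 2 with k
    rw [neg_neg, zpow_neg, ← inv_zpow, inv_neg_one, zpow_natCast,
      show ((k : ℤ) + 1) = ((k + 1 : ℕ) : ℤ) by push_cast; rfl, zpow_natCast, pow_succ]
    ring
  rw [Pentagonal.tprod_one_sub_pow (x := x) (tendsto_pow_atTop_nhds_zero_of_norm_lt_one hx)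
    (fun k ↦ hbd.of_norm_bounded fun n ↦ norm_pentagonal_aux_le hx k n) ?_ hnat.summable ?_]
  · exact hnat.tsum_eq
  · intro k
    have := multipliable_one_add_of_summable (f := fun n : ℕ ↦ -x ^ (n + k + 1)) (by
      simpa [add_assoc] using (summable_nat_add_iff (k + 1)).mpr hg)
    simpa [sub_eq_add_neg] using this
  · have hz : Tendsto (fun k : ℕ ↦ ‖x‖ ^ k * ∑' n : ℕ, ‖x‖ ^ n * Real.exp (1 - ‖x‖)⁻¹)
        atTop (nhds 0) := by
      simpa using (tendsto_pow_atTop_nhds_zero_of_lt_one (norm_nonneg x) hx).mul_const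
        (∑' n : ℕ, ‖x‖ ^ n * Real.exp (1 - ‖x‖)⁻¹)
    refine squeeze_zero_norm (fun k ↦ ?_) hz
    rw [norm_mul, norm_mul, norm_pow, norm_neg, norm_one, one_pow, one_mul, norm_pow]
    refine mul_le_mul ?_ ?_ (norm_nonneg _) (by positivity)
    · refine pow_le_pow_of_le_one (norm_nonneg _) hx.le ?_
      rw [Nat.le_div_iff_mul_le (by norm_num)]
      nlinarith
    · exact tsum_of_norm_bounded hbd.hasSum fun n ↦ norm_pentagonal_aux_le hx k n

lemma norm_qq_lt_one {τ : ℂ} (hτ : 0 < τ.im) : ‖qq τ‖ < 1 := by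
  simpa [qq] using UpperHalfPlane.norm_exp_two_pi_I_lt_one ⟨τ, hτ⟩

/-- Completing the square: `(6j+1)²/24 = 1/24 + j(3j+1)/2`. -/
lemma exp_theta_eq (j : ℤ) (τ : ℂ) :
    Complex.exp ((π : ℂ) * I / 12 * ((6 * j + 1 : ℤ) : ℂ) ^ 2 * τ) =
      Complex.exp ((π : ℂ) * I / 12 * τ) * qq τ ^ (j * (3 * j + 1) / 2) := by
  rw [qq, ← Complex.exp_int_mul, ← Complex.exp_add]
  congr 1
  have h : 2 * (j * (3 * j + 1) / 2) = j * (3 * j + 1) := by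
    rw [← two_mul_natCast_pentagonal_neg, Int.mul_ediv_cancel_left _ (by norm_num)]
  have hc : (2 : ℂ) * ((j * (3 * j + 1) / 2 : ℤ) : ℂ) = j * (3 * j + 1) := by
    exact_mod_cast congrArg (Int.cast : ℤ → ℂ) h
  push_cast
  linear_combination (-(π : ℂ) * I * τ) * hc

lemma thetaNum_eq (n : ℕ) (τ : ℂ) :
    thetaNum n τ = Complex.exp ((π : ℂ) * I / 12 * τ) *
      ∑' j : ℤ, (-1 : ℂ) ^ j * ((6 * j + 1 : ℤ) : ℂ) ^ (2 * n) *
        qq τ ^ (j * (3 * j + 1) / 2) := by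
  rw [thetaNum, ← tsum_mul_left]
  refine tsum_congr fun j ↦ ?_
  rw [exp_theta_eq]
  ring

lemma thetaNum_zero_eq_eta {τ : ℂ} (hτ : 0 < τ.im) : thetaNum 0 τ = ModularForm.eta τ := by
  have hpent (j : ℤ) : qq τ ^ (j * (3 * j + 1) / 2) = qq τ ^ pentagonal (-j) := by
    rw [← two_mul_natCast_pentagonal_neg, Int.mul_ediv_cancel_left _ (by norm_num), zpow_natCast]
  have hs : Summable fun j : ℤ ↦ (-1 : ℂ) ^ j * qq τ ^ pentagonal (-j) := by
    have h := (summable_theta 0 hτ).mul_left (Complex.exp ((π : ℂ) * I / 12 * τ))⁻¹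
    refine h.congr fun j ↦ ?_
    rw [exp_theta_eq, hpent]
    field_simp [Complex.exp_ne_zero]
    simp
  rw [thetaNum_eq, ModularForm.eta]
  congr 1
  · rw [Function.Periodic.qParam]
    congr 1
    push_cast
    ring
  · simp only [ModularForm.eta_q_eq_pow]
    rw [show Complex.exp (2 * (π : ℂ) * I * τ) = qq τ from rfl,
      tprod_one_sub_pow_eq_tsum (norm_qq_lt_one hτ) hs]
    refine tsum_congr fun j ↦ ?_
    rw [hpent]
    simp

lemma thetaNum_zero_ne_zero {τ : ℂ} (hτ : 0 < τ.im) : thetaNum 0 τ ≠ 0 := by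
  rw [thetaNum_zero_eq_eta hτ]
  exact ModularForm.eta_ne_zero hτ

lemma Vram_qq_eq (n : ℕ) (τ : ℂ) : Vram n (qq τ) = thetaNum n τ / thetaNum 0 τ := by
  rw [thetaNum_eq, thetaNum_eq, mul_div_mul_left _ _ (Complex.exp_ne_zero _), Vram]
  simp

lemma Vram_zero_qq {τ : ℂ} (hτ : 0 < τ.im) : Vram 0 (qq τ) = 1 := by
  rw [Vram_qq_eq, div_self (thetaNum_zero_ne_zero hτ)]

/-- Ramanujan's differential recursion `24 q dV_{2n}/dq = V_{2n+2} − V_2 V_{2n}`. -/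
lemma hasDerivAt_Vram_qq (n : ℕ) {τ : ℂ} (hτ : 0 < τ.im) :
    HasDerivAt (fun z ↦ Vram n (qq z))
      ((π : ℂ) * I / 12 * (Vram (n + 1) (qq τ) - Vram 1 (qq τ) * Vram n (qq τ))) τ := by
  simp only [Vram_qq_eq]
  have h0 := thetaNum_zero_ne_zero hτ
  convert! (hasDerivAt_thetaNum n hτ).div (hasDerivAt_thetaNum 0 hτ) h0 using 1
  field_simp

lemma Vram_one_qq_eq_E2 (z : ℍ) : Vram 1 (qq z) = EisensteinSeries.E2 z := by
  have h := ModularForm.logDeriv_eta_eq_E2 z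
  have he : ModularForm.eta =ᶠ[nhds (z : ℂ)] thetaNum 0 := by
    filter_upwards [(isOpen_lt continuous_const Complex.continuous_im).mem_nhds z.im_pos]
      with w hw using (thetaNum_zero_eq_eta hw).symm
  rw [logDeriv_apply, he.deriv_eq, he.eq_of_nhds, (hasDerivAt_thetaNum 0 z.im_pos).deriv,
    mul_div_assoc, ← Vram_qq_eq] at h
  have hpi : (π : ℂ) * I / 12 ≠ 0 := by simp [Real.pi_ne_zero]
  exact mul_left_cancel₀ hpi h

/-! ### Quasimodularity of the normalized series -/

/-- The normalized series `W_n = (−1)^n π^{2n} V_{2n}(q) / (2n)!`, as a function of `τ`. -/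
def Wfun (n : ℕ) (τ : ℂ) : ℂ :=
  (-1 : ℂ) ^ n * (π : ℂ) ^ (2 * n) * Vram n (qq τ) / ((2 * n).factorial : ℂ)

lemma Wfun_zero {τ : ℂ} (hτ : 0 < τ.im) : Wfun 0 τ = 1 := by
  simp [Wfun, Vram_zero_qq hτ]

lemma Wfun_one (τ : ℂ) : Wfun 1 τ = -(π : ℂ) ^ 2 / 2 * Vram 1 (qq τ) := by
  simp [Wfun]; ring

/-- Ramanujan's recursion for the normalized series:
`12πi W_n' = (2n+2)(2n+1) W_{n+1} − 2 W_1 W_n`. -/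
lemma hasDerivAt_Wfun (n : ℕ) {τ : ℂ} (hτ : 0 < τ.im) :
    HasDerivAt (Wfun n) (((2 * n + 2) * (2 * n + 1) * Wfun (n + 1) τ -
      2 * Wfun 1 τ * Wfun n τ) / (12 * π * I)) τ := by
  have h := ((hasDerivAt_Vram_qq n hτ).const_mul ((-1 : ℂ) ^ n * (π : ℂ) ^ (2 * n))).div_const
    ((2 * n).factorial : ℂ)
  convert! h using 1
  have hpi : (π : ℂ) ≠ 0 := by simp [Real.pi_ne_zero]
  have hf : ((2 * n).factorial : ℂ) ≠ 0 := by exact_mod_cast (2 * n).factorial_ne_zero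
  have hf1 : (2 * n + 1 : ℂ) ≠ 0 := by exact_mod_cast (2 * n).succ_ne_zero
  have hf2 : (2 * n + 2 : ℂ) ≠ 0 := by exact_mod_cast (2 * n + 1).succ_ne_zero
  have hfac : ((2 * (n + 1)).factorial : ℂ) =
      (2 * n + 2) * ((2 * n + 1) * ((2 * n).factorial : ℂ)) := by
    rw [show 2 * (n + 1) = 2 * n + 1 + 1 by ring, Nat.factorial_succ, Nat.factorial_succ]
    push_cast
    ring
  rw [Wfun_one, Wfun, Wfun, hfac]
  field_simp
  ring_nf
  simp only [I_sq]
  ring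

lemma mobius_denom_ne_zero {a b c d : ℤ} (h : a * d - b * c = 1) {τ : ℂ} (hτ : 0 < τ.im) :
    (c : ℂ) * τ + d ≠ 0 := by
  intro h0
  have him := congrArg Complex.im h0
  have hre := congrArg Complex.re h0
  simp only [add_im, mul_im, intCast_re, intCast_im, zero_mul, add_zero, zero_im] at him
  rcases mul_eq_zero.mp him with hc | hc
  · have hc' : c = 0 := by exact_mod_cast hc
    subst hc'
    have hd : d = 0 := by simpa using hre
    subst hd
    simp at h
  · exact hτ.ne' hc

/-- The matrix `(a b; c d)` as an element of `SL₂(ℤ)`. -/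
def mkSL (a b c d : ℤ) (h : a * d - b * c = 1) : Matrix.SpecialLinearGroup (Fin 2) ℤ :=
  ⟨!![a, b; c, d], by rw [Matrix.det_fin_two_of]; exact h⟩

lemma coe_mkSL_smul {a b c d : ℤ} (h : a * d - b * c = 1) (z : ℍ) :
    ((mkSL a b c d h • z : ℍ) : ℂ) = ((a : ℂ) * z + b) / ((c : ℂ) * z + d) := by
  rw [UpperHalfPlane.specialLinearGroup_apply]
  simp [mkSL]

lemma mobius_im_pos {a b c d : ℤ} (h : a * d - b * c = 1) {τ : ℂ} (hτ : 0 < τ.im) :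
    0 < (((a : ℂ) * τ + b) / ((c : ℂ) * τ + d)).im := by
  have := coe_mkSL_smul h ⟨τ, hτ⟩
  simp only at this
  rw [← this]
  exact UpperHalfPlane.im_pos _

lemma hasDerivAt_mobius {a b c d : ℤ} (h : a * d - b * c = 1) {τ : ℂ} (hτ : 0 < τ.im) :
    HasDerivAt (fun z : ℂ ↦ ((a : ℂ) * z + b) / ((c : ℂ) * z + d))
      (1 / ((c : ℂ) * τ + d) ^ 2) τ := by
  have h0 := mobius_denom_ne_zero h hτ
  have h1 : HasDerivAt (fun z : ℂ ↦ (a : ℂ) * z + b) a τ := by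
    simpa using ((hasDerivAt_id τ).const_mul (a : ℂ)).add_const (b : ℂ)
  have h2 : HasDerivAt (fun z : ℂ ↦ (c : ℂ) * z + d) c τ := by
    simpa using ((hasDerivAt_id τ).const_mul (c : ℂ)).add_const (d : ℂ)
  convert! h1.div h2 h0 using 1
  have hc : (a : ℂ) * d - b * c = 1 := by exact_mod_cast h
  congr 1
  linear_combination -hc

/-- The transformation of `V_2 = E_2`, in normalized form. -/
lemma Wfun_one_mobius {a b c d : ℤ} (h : a * d - b * c = 1) {τ : ℂ} (hτ : 0 < τ.im) :
    Wfun 1 (((a : ℂ) * τ + b) / ((c : ℂ) * τ + d)) =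
      ((c : ℂ) * τ + d) ^ 2 * Wfun 1 τ + 3 * π * I * c * ((c : ℂ) * τ + d) := by
  have h0 := mobius_denom_ne_zero h hτ
  have hpi : (π : ℂ) ≠ 0 := by simp [Real.pi_ne_zero]
  let z : ℍ := ⟨τ, hτ⟩
  have hE := congrFun (EisensteinSeries.E2_slash_action (mkSL a b c d h)) z
  have hd : UpperHalfPlane.denom (mkSL a b c d h) z = (c : ℂ) * τ + d := by
    rw [ModularGroup.denom_apply]
    simp [mkSL, z]
  rw [ModularForm.SL_slash_apply, hd, Pi.sub_apply, Pi.smul_apply, EisensteinSeries.D2, hd,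
    ← Vram_one_qq_eq_E2, ← Vram_one_qq_eq_E2, coe_mkSL_smul, riemannZeta_two] at hE
  have hc : ((mkSL a b c d h) 1 0 : ℤ) = c := by simp [mkSL]
  rw [hc] at hE
  change Vram 1 (qq (((a : ℂ) * τ + b) / ((c : ℂ) * τ + d))) * _ = Vram 1 (qq τ) - _ at hE
  rw [Wfun_one, Wfun_one]
  rw [zpow_neg, show ((2 : ℤ)) = ((2 : ℕ) : ℤ) from rfl, zpow_natCast, ← div_eq_mul_inv,
    div_eq_iff (pow_ne_zero 2 h0), smul_eq_mul] at hE
  rw [hE]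
  field_simp
  ring

/-- The coefficient identity behind the induction step of `Wfun_mobius`: for `r + m = n + 1`,
`(2n+2)(2n+1) = 2m(2m−1) + r(8m+4r−2)`. -/
lemma antidiagonal_step (κ c J : ℂ) (hκ : κ ≠ 0) (w : ℕ → ℂ) (n : ℕ) :
    (2 * n + 2) * (2 * n + 1) * ∑ p ∈ antidiagonal (n + 1),
        (κ * c) ^ p.1 / (p.1.factorial : ℂ) * J ^ (2 * p.2 + p.1) * w p.2 =
      2 * (J ^ 2 * w 1 + κ * c * J) * (∑ p ∈ antidiagonal n,
        (κ * c) ^ p.1 / (p.1.factorial : ℂ) * J ^ (2 * p.2 + p.1) * w p.2) +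
      4 * κ * J ^ 2 * ∑ p ∈ antidiagonal n,
        ((κ * c) ^ p.1 / (p.1.factorial : ℂ) *
            (((2 * p.2 + p.1 : ℕ) : ℂ) * J ^ (2 * p.2 + p.1 - 1) * c) * w p.2 +
          (κ * c) ^ p.1 / (p.1.factorial : ℂ) * J ^ (2 * p.2 + p.1) *
            (((2 * p.2 + 2) * (2 * p.2 + 1) * w (p.2 + 1) - 2 * w 1 * w p.2) / (4 * κ))) := by
  have hsplit : (2 * n + 2) * (2 * n + 1) * ∑ p ∈ antidiagonal (n + 1),
        (κ * c) ^ p.1 / (p.1.factorial : ℂ) * J ^ (2 * p.2 + p.1) * w p.2 =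
      (∑ p ∈ antidiagonal (n + 1), (2 * p.2) * (2 * p.2 - 1) *
        ((κ * c) ^ p.1 / (p.1.factorial : ℂ) * J ^ (2 * p.2 + p.1) * w p.2)) +
      ∑ p ∈ antidiagonal (n + 1), p.1 * (8 * p.2 + 4 * p.1 - 2) *
        ((κ * c) ^ p.1 / (p.1.factorial : ℂ) * J ^ (2 * p.2 + p.1) * w p.2) := by
    rw [Finset.mul_sum, ← Finset.sum_add_distrib]
    refine Finset.sum_congr rfl fun p hp ↦ ?_
    have hp' : (p.1 : ℂ) + p.2 = n + 1 := by exact_mod_cast mem_antidiagonal.mp hp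
    rw [← add_mul]
    congr 1
    have : (n : ℂ) = p.1 + p.2 - 1 := by linear_combination -hp'
    rw [this]
    ring
  rw [hsplit, Finset.Nat.sum_antidiagonal_succ', Finset.Nat.sum_antidiagonal_succ]
  simp only [Nat.cast_zero, mul_zero, zero_mul, zero_add, add_zero]
  rw [Finset.mul_sum, Finset.mul_sum, ← Finset.sum_add_distrib, ← Finset.sum_add_distrib]
  refine Finset.sum_congr rfl fun p _ ↦ ?_
  obtain ⟨r, m⟩ := p
  have hpow : ((2 * m + r : ℕ) : ℂ) * J ^ (2 * m + r - 1) * J =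
      (2 * m + r : ℕ) * J ^ (2 * m + r) := by
    rcases Nat.eq_zero_or_pos (2 * m + r) with h | h
    · simp [h]
    · rw [mul_assoc, ← pow_succ, Nat.sub_add_cancel h]
  have hf : (r.factorial : ℂ) ≠ 0 := by exact_mod_cast r.factorial_ne_zero
  have hr : (r + 1 : ℂ) ≠ 0 := by exact_mod_cast r.succ_ne_zero
  simp only [Nat.factorial_succ]
  generalize hP : ((2 * m + r : ℕ) : ℂ) * J ^ (2 * m + r - 1) = P at hpow ⊢
  have e : 4 * κ * J ^ 2 * ((κ * c) ^ r / (r.factorial : ℂ) * (P * c) * w m) =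
      4 * κ * J * ((κ * c) ^ r / (r.factorial : ℂ) * (((2 * m + r : ℕ) * J ^ (2 * m + r)) * c)
        * w m) := by
    rw [← hpow]; ring
  rw [mul_add (4 * κ * J ^ 2), e]
  push_cast
  field_simp
  ring

/-- Quasimodularity of `W_n`: the correction terms form an exponential generating series in
`3πi c (cτ+d)`. The induction step differentiates the formula for `n` along `τ ↦ γτ` and uses
Ramanujan's recursion at `γτ` and at `τ`. -/
lemma Wfun_mobius {a b c d : ℤ} (h : a * d - b * c = 1) (n : ℕ) :
    ∀ τ : ℂ, 0 < τ.im → Wfun n (((a : ℂ) * τ + b) / ((c : ℂ) * τ + d)) =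
      ∑ p ∈ antidiagonal n, (3 * π * I * c) ^ p.1 / (p.1.factorial : ℂ) *
        ((c : ℂ) * τ + d) ^ (2 * p.2 + p.1) * Wfun p.2 τ := by
  induction n with
  | zero =>
    intro τ hτ
    simp [Wfun_zero hτ, Wfun_zero (mobius_im_pos h hτ)]
  | succ n ih =>
    intro τ hτ
    have h0 := mobius_denom_ne_zero h hτ
    have hpi : (π : ℂ) ≠ 0 := by simp [Real.pi_ne_zero]
    set γ : ℂ → ℂ := fun z ↦ ((a : ℂ) * z + b) / ((c : ℂ) * z + d) with hγ
    set J : ℂ := (c : ℂ) * τ + d with hJ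
    set κ : ℂ := 3 * π * I with hκ
    have hκ0 : κ ≠ 0 := by simp [hκ, hpi]
    have hL := (hasDerivAt_Wfun n (mobius_im_pos h hτ)).comp τ (hasDerivAt_mobius h hτ)
    have hJd : HasDerivAt (fun z : ℂ ↦ (c : ℂ) * z + d) c τ := by
      simpa using ((hasDerivAt_id τ).const_mul (c : ℂ)).add_const (d : ℂ)
    have hR := HasDerivAt.fun_sum (u := antidiagonal n) (x := τ)
      (A := fun p z ↦ (κ * c) ^ p.1 / (p.1.factorial : ℂ) *
        ((c : ℂ) * z + d) ^ (2 * p.2 + p.1) * Wfun p.2 z)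
      (fun p _ ↦ ((hJd.pow (2 * p.2 + p.1)).const_mul
        ((κ * c) ^ p.1 / (p.1.factorial : ℂ))).mul (hasDerivAt_Wfun p.2 hτ))
    have heq : (Wfun n ∘ γ) =ᶠ[nhds τ] fun z ↦ ∑ p ∈ antidiagonal n,
        (κ * c) ^ p.1 / (p.1.factorial : ℂ) *
        ((c : ℂ) * z + d) ^ (2 * p.2 + p.1) * Wfun p.2 z := by
      filter_upwards [(isOpen_lt continuous_const Complex.continuous_im).mem_nhds hτ]
        with w hw using ih w hw
    have hD := hL.unique (hR.congr_of_eventuallyEq heq)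
    have hW1 := Wfun_one_mobius h hτ
    have hWn := ih τ hτ
    have h12 : (12 * π * I : ℂ) = 4 * κ := by rw [hκ]; ring
    have hstep := antidiagonal_step κ c J hκ0 (fun m ↦ Wfun m τ) n
    simp only [h12] at hD
    rw [hW1, hWn, mul_one_div, div_div,
      div_eq_iff (mul_ne_zero (mul_ne_zero (by norm_num) hκ0) (pow_ne_zero 2 h0))] at hD
    have hn : (2 * n + 2 : ℂ) * (2 * n + 1) ≠ 0 := by
      norm_cast
    apply mul_left_cancel₀ hn
    rw [hstep]
    linear_combination hD

/-! ### Generating series and the modular completion -/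

/-- The generating series `∑ W_n(τ) Xⁿ`. -/
def Wseries (τ : ℂ) : PowerSeries ℂ := PowerSeries.mk fun n ↦ Wfun n τ

/-- The formal exponential `e^{aX}`. -/
def expSeries (a : ℂ) : PowerSeries ℂ := rescale a (PowerSeries.exp ℂ)

lemma coeff_expSeries (a : ℂ) (n : ℕ) :
    PowerSeries.coeff n (expSeries a) = a ^ n / (n.factorial : ℂ) := by
  simp [expSeries, PowerSeries.coeff_rescale, PowerSeries.coeff_exp, div_eq_mul_inv]

/-- The completions have generating series `e^{3πX/(2v)} ∑ W_n Xⁿ`. -/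
lemma Vhat_eq_coeff (n : ℕ) (τ : ℂ) :
    Vhat n τ = PowerSeries.coeff n (expSeries (3 * π / (2 * (τ.im : ℂ))) * Wseries τ) := by
  rw [PowerSeries.coeff_mul, Finset.Nat.sum_antidiagonal_eq_sum_range_succ_mk, Vhat]
  refine Finset.sum_congr rfl fun j hj ↦ ?_
  have hjn : j ≤ n := Nat.lt_succ_iff.mp (Finset.mem_range.mp hj)
  obtain ⟨m, rfl⟩ := Nat.exists_eq_add_of_le hjn
  simp only [coeff_expSeries, Wseries, PowerSeries.coeff_mk, Wfun]
  rw [show j + m - j = m by omega, show 2 * (j + m) - j = j + 2 * m by omega,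
    show 2 * (j + m) - 2 * j = 2 * m by omega, show j + m + j = 2 * j + m by ring, pow_add, pow_mul,
    pow_add (π : ℂ), div_pow, mul_pow (3 : ℂ)]
  simp only [neg_one_sq, one_pow, one_mul, div_eq_mul_inv, mul_inv]
  ring

lemma Wseries_mobius {a b c d : ℤ} (h : a * d - b * c = 1) {τ : ℂ} (hτ : 0 < τ.im) :
    Wseries (((a : ℂ) * τ + b) / ((c : ℂ) * τ + d)) =
      expSeries (3 * π * I * c * ((c : ℂ) * τ + d)) *
        rescale (((c : ℂ) * τ + d) ^ 2) (Wseries τ) := by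
  ext n
  rw [PowerSeries.coeff_mul, Wseries, PowerSeries.coeff_mk, Wfun_mobius h n τ hτ]
  refine Finset.sum_congr rfl fun p _ ↦ ?_
  rw [coeff_expSeries, PowerSeries.coeff_rescale, Wseries, PowerSeries.coeff_mk,
    mul_pow (3 * (π : ℂ) * I * c) ((c : ℂ) * τ + d) p.1,
    pow_add, pow_mul]
  ring

/-- With `J = cτ+d`, the transformation `1/Im(γτ) = J²/v − 2icJ`, multiplied by `3π/2`. -/
lemma mobius_exponent {a b c d : ℤ} (h : a * d - b * c = 1) {τ : ℂ} (hτ : 0 < τ.im) :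
    3 * π / (2 * (((((a : ℂ) * τ + b) / ((c : ℂ) * τ + d)).im : ℝ) : ℂ)) +
        3 * π * I * c * ((c : ℂ) * τ + d) =
      ((c : ℂ) * τ + d) ^ 2 * (3 * π / (2 * (τ.im : ℂ))) := by
  have h0 := mobius_denom_ne_zero h hτ
  have hv : (τ.im : ℂ) ≠ 0 := by exact_mod_cast hτ.ne'
  have hN : ((Complex.normSq ((c : ℂ) * τ + d) : ℝ) : ℂ) =
      ((c : ℂ) * τ + d) * ((c : ℂ) * τ + d - 2 * I * c * τ.im) := by
    rw [← Complex.mul_conj]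
    congr 1
    have := Complex.sub_conj τ
    simp only [map_add, map_mul, map_intCast]
    push_cast at this
    linear_combination -(c : ℂ) * this
  have him : (((a : ℂ) * τ + b) / ((c : ℂ) * τ + d)).im =
      τ.im / Complex.normSq ((c : ℂ) * τ + d) := by
    have hdet : (a : ℝ) * d - b * c = 1 := by exact_mod_cast h
    rw [Complex.div_im]
    simp only [add_im, add_re, mul_im, mul_re, intCast_re, intCast_im, zero_mul, add_zero, sub_zero]
    rw [← sub_div]
    congr 1
    linear_combination τ.im * hdet
  have hns : ((Complex.normSq ((c : ℂ) * τ + d) : ℝ) : ℂ) ≠ 0 := by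
    exact_mod_cast (Complex.normSq_pos.mpr h0).ne'
  rw [him]
  push_cast
  have e : (3 * π / (2 * ((τ.im : ℂ) / (Complex.normSq ((c : ℂ) * τ + d) : ℂ))) : ℂ) =
      3 * π * (Complex.normSq ((c : ℂ) * τ + d) : ℂ) / (2 * τ.im) := by
    field_simp
  rw [e, hN]
  field_simp
  ring

lemma Vhat_mobius (n : ℕ) {a b c d : ℤ} (h : a * d - b * c = 1) {τ : ℂ} (hτ : 0 < τ.im) :
    Vhat n (((a : ℂ) * τ + b) / ((c : ℂ) * τ + d)) =
      ((c : ℂ) * τ + d) ^ (2 * n) * Vhat n τ := by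
  rw [Vhat_eq_coeff, Vhat_eq_coeff, Wseries_mobius h hτ, ← mul_assoc, expSeries, expSeries,
    PowerSeries.exp_mul_exp_eq_exp_add, mobius_exponent h hτ, pow_mul, ← PowerSeries.coeff_rescale,
    map_mul (rescale _), expSeries, PowerSeries.rescale_rescale,
    mul_comm (3 * (π : ℂ) / (2 * (τ.im : ℂ)))]

/-- For every `n ≥ 0`, the completion `V̂_{2n}` transforms like a modular
form of weight `2n` on SL₂(ℤ), and is a polynomial in `1/v` of degree exactly `n` with
holomorphic coefficients; hence it is an almost holomorphic modular form of weight `2n` and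
depth `n`. -/
theorem Vhat_almost_holomorphic_modular (n : ℕ) :
    (∀ a b c d : ℤ, a * d - b * c = 1 → ∀ τ : ℂ, 0 < τ.im →
      Vhat n ((a * τ + b) / (c * τ + d)) = (c * τ + d) ^ (2 * n) * Vhat n τ) ∧
    (∃ f : ℕ → ℂ → ℂ,
      (∀ j, j ≤ n → DifferentiableOn ℂ (f j) {τ : ℂ | 0 < τ.im}) ∧
      (∃ τ : ℂ, 0 < τ.im ∧ f n τ ≠ 0) ∧
      (∀ τ : ℂ, 0 < τ.im →
        Vhat n τ = ∑ j ∈ Finset.range (n + 1), f j τ / (τ.im : ℂ) ^ j)) := by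
  refine ⟨fun a b c d h τ hτ ↦ Vhat_mobius n h hτ, fun j τ ↦
    (-1 : ℂ) ^ (n + j) * 3 ^ j * (π : ℂ) ^ (2 * n - j) * Vram (n - j) (qq τ) /
      (2 ^ j * (Nat.factorial j : ℂ) * (Nat.factorial (2 * n - 2 * j) : ℂ)), ?_, ⟨I, by simp, ?_⟩,
    fun τ hτ ↦ Finset.sum_congr rfl fun j _ ↦ ?_⟩
  · intro j _ τ hτ
    exact (((hasDerivAt_Vram_qq (n - j) hτ).differentiableAt.const_mul _).div_const
      _).differentiableWithinAt
  -- The coefficient of `1/vⁿ` is the nonzero constant `(3π/2)ⁿ/n!`, as `V_0 = 1`.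
  · simp only [Nat.sub_self, Vram_zero_qq (show 0 < I.im by simp)]
    simp [Real.pi_ne_zero, Nat.factorial_ne_zero]
  · rw [mul_pow, div_div]
    congr 1
    ring
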